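/- Let α ≥ 0 be real. Then for every real z: e^{−z²} = −2α z² M(−α/2 + 1/2, 3/2, −z²) M(−α/2 + 1, 3/2, −z²) + M(−α/2, 1/2, −z²) M(−α/2 + 1/2, 1/2, −z²). -/

import Mathlib

/-!
For `b ∉ ℤ`, Kummer's equation `x y'' + (b - x) y' - a y = 0` has the solutions `M(a, b, x)` and
`x ^ (1 - b) M(a - b + 1, 2 - b, x)`, so by Abel's identity their Wronskian is a constant multiple
of `x ^ (-b) e ^ x`. Divided by `(1 - b) x ^ (-b)`, the Wronskian becomes an entire function which
equals its own derivative and takes the value `1` at `0`, hence is `e ^ x`. The theorem is the case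
`a = -α / 2`, `b = 1 / 2`, at the point `-z ^ 2`.
-/

noncomputable def poch (a : ℝ) (s : ℕ) : ℝ := ∏ i ∈ Finset.range s, (a + i)

/-- Kummer's confluent hypergeometric function `M(a,b,z)`,
defined by the everywhere-convergent series `M(a,b,z) = Σ_{s} (a)_s z^s / ((b)_s s!)`. -/
noncomputable def kummerM (a b z : ℝ) : ℝ :=
  ∑' s : ℕ, poch a s / (poch b s * (Nat.factorial s)) * z ^ s

/-- Tricomi's confluent hypergeometric function
`U(a,b,z) = (1/Γ(a)) ∫_0^∞ e^{−z t} t^{a−1} (1+t)^{b−a−1} dt`. -/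
noncomputable def tricomiU (a b z : ℝ) : ℝ :=
  (1 / Real.Gamma a) *
    ∫ t in Set.Ioi (0:ℝ), Real.exp (-z * t) * t ^ (a - 1) * (1 + t) ^ (b - a - 1)

open Filter Topology

lemma poch_succ (a : ℝ) (s : ℕ) : poch a (s + 1) = poch a s * (a + s) :=
  Finset.prod_range_succ _ s

lemma poch_succ_left (a : ℝ) (s : ℕ) : poch a (s + 1) = a * poch (a + 1) s := by
  rw [poch, Finset.prod_range_succ', poch, mul_comm]
  push_cast
  simp only [add_zero, add_assoc, add_comm (1 : ℝ)]

lemma mul_poch_add_one (a : ℝ) (s : ℕ) : a * poch (a + 1) s = (a + s) * poch a s := by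
  rw [← poch_succ_left, poch_succ, mul_comm]

lemma poch_ne_zero {b : ℝ} (hb : ∀ n : ℕ, b ≠ -n) (s : ℕ) : poch b s ≠ 0 :=
  Finset.prod_ne_zero_iff.mpr fun i _ h ↦ hb i (eq_neg_of_add_eq_zero_left h)

/-- The Taylor coefficient `(a)_s / ((b)_s s!)` of `z ^ s` in Kummer's function `M(a, b, z)`. If
`b` is a nonpositive integer, division by zero makes all but finitely many coefficients vanish. -/
noncomputable def kummerCoeff (a b : ℝ) (s : ℕ) : ℝ :=
  poch a s / (poch b s * (Nat.factorial s))

section Coefficients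

variable (a b : ℝ) (s : ℕ)

lemma kummerCoeff_zero : kummerCoeff a b 0 = 1 := by
  simp [kummerCoeff, poch]

lemma kummerCoeff_succ :
    kummerCoeff a b (s + 1) = (a + s) / (b + s) / (s + 1) * kummerCoeff a b s := by
  simp only [kummerCoeff, poch_succ, Nat.factorial_succ, Nat.cast_mul, Nat.cast_succ,
    div_eq_mul_inv, mul_inv]
  ring

lemma kummerCoeff_succ_mul :
    kummerCoeff a b (s + 1) * (s + 1) = a / b * kummerCoeff (a + 1) (b + 1) s := by
  have hs : (s + 1 : ℝ) ≠ 0 := s.cast_add_one_ne_zero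
  rw [kummerCoeff, kummerCoeff, poch_succ_left, poch_succ_left, Nat.factorial_succ,
    div_mul_div_comm, div_mul_eq_mul_div, ← mul_div_mul_right (a * _) _ hs]
  push_cast
  ring

lemma mul_kummerCoeff_add_one_left :
    a * kummerCoeff (a + 1) b s = (a + s) * kummerCoeff a b s := by
  rw [kummerCoeff, kummerCoeff, ← mul_div_assoc, ← mul_div_assoc, mul_poch_add_one]

variable {b} in
lemma mul_kummerCoeff_eq_mul_add_one_right (hb : ∀ n : ℕ, b ≠ -n) :
    b * kummerCoeff a b s = (b + s) * kummerCoeff a (b + 1) s := by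
  have hb₁ : ∀ n : ℕ, b + 1 ≠ -n := fun n h ↦ hb (n + 1) (by push_cast; linarith)
  have hpoch : poch b s ≠ 0 := poch_ne_zero hb s
  have hpoch₁ : poch (b + 1) s ≠ 0 := poch_ne_zero hb₁ s
  rw [kummerCoeff, kummerCoeff]
  field_simp
  linear_combination poch a s * mul_poch_add_one b s

end Coefficients

section Series

variable (a b x : ℝ)

lemma summable_kummerCoeff_mul_pow : Summable fun s ↦ kummerCoeff a b s * x ^ s := by
  have hratio : Tendsto (fun s : ℕ ↦ (a + s) / (b + s) / (s + 1) * x) atTop (𝓝 0) := by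
    have h₁ : Tendsto (fun s : ℕ ↦ (a + s) / (b + s)) atTop (𝓝 1) := by
      simpa using tendsto_add_mul_div_add_mul_atTop_nhds a b (1 : ℝ) one_ne_zero
    simpa [div_eq_mul_inv] using
      (h₁.mul (tendsto_one_div_add_atTop_nhds_zero_nat (𝕜 := ℝ))).mul_const x
  refine summable_of_ratio_norm_eventually_le (r := 1 / 2) (by norm_num) ?_
  filter_upwards [hratio.norm.eventually_le_const (by simp : ‖(0 : ℝ)‖ < 1 / 2)] with s hs
  calc ‖kummerCoeff a b (s + 1) * x ^ (s + 1)‖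
      = ‖(a + s) / (b + s) / (s + 1) * x‖ * ‖kummerCoeff a b s * x ^ s‖ := by
        rw [← norm_mul, kummerCoeff_succ]; ring_nf
    _ ≤ 1 / 2 * ‖kummerCoeff a b s * x ^ s‖ := by gcongr

lemma hasSum_kummerM : HasSum (fun s ↦ kummerCoeff a b s * x ^ s) (kummerM a b x) :=
  (summable_kummerCoeff_mul_pow a b x).hasSum

lemma kummerM_zero_right : kummerM a b 0 = 1 := by
  refine (hasSum_kummerM a b 0).unique ?_
  simpa [kummerCoeff_zero] using
    hasSum_single (f := fun s ↦ kummerCoeff a b s * 0 ^ s) 0 fun s hs ↦ by simp [hs]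

lemma hasSum_kummerCoeff_mul_deriv_pow :
    HasSum (fun s : ℕ ↦ kummerCoeff a b s * (s * x ^ (s - 1)))
      (a / b * kummerM (a + 1) (b + 1) x) := by
  rw [← hasSum_nat_add_iff' 1, Finset.sum_range_one, Nat.cast_zero, zero_mul, mul_zero, sub_zero]
  refine ((hasSum_kummerM (a + 1) (b + 1) x).mul_left (a / b)).congr_fun fun s ↦ ?_
  rw [← mul_assoc, ← mul_assoc, ← kummerCoeff_succ_mul, Nat.cast_succ, Nat.add_sub_cancel]

lemma hasDerivAt_kummerM :
    HasDerivAt (kummerM a b) (a / b * kummerM (a + 1) (b + 1) x) x := by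
  set R : ℝ := |x| + 1
  have hbound : ∀ s : ℕ, ∀ y ∈ Metric.ball (0 : ℝ) R,
      ‖kummerCoeff a b s * (s * y ^ (s - 1))‖ ≤ ‖kummerCoeff a b s * (s * R ^ (s - 1))‖ := by
    intro s y hy
    have hyR : ‖y‖ ≤ ‖R‖ := (mem_ball_zero_iff.mp hy).le.trans (le_abs_self R)
    simp only [norm_mul, norm_pow]
    gcongr
  have hx : x ∈ Metric.ball (0 : ℝ) R := by simp [R]
  rw [← (hasSum_kummerCoeff_mul_deriv_pow a b x).tsum_eq]
  exact hasDerivAt_tsum_of_isPreconnected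
    (hasSum_kummerCoeff_mul_deriv_pow a b R).summable.norm
    Metric.isOpen_ball (convex_ball 0 R).isPreconnected
    (fun s y _ ↦ (hasDerivAt_pow s y).const_mul _) hbound hx
    (summable_kummerCoeff_mul_pow a b x) hx

lemma hasSum_nat_mul_kummerCoeff_mul_pow :
    HasSum (fun s : ℕ ↦ s * kummerCoeff a b s * x ^ s)
      (x * (a / b * kummerM (a + 1) (b + 1) x)) := by
  refine ((hasSum_kummerCoeff_mul_deriv_pow a b x).mul_left x).congr_fun fun s ↦ ?_
  cases s with
  | zero => simp
  | succ s => rw [Nat.add_sub_cancel]; ring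

lemma mul_kummerM_add_one_left :
    a * kummerM (a + 1) b x = a * kummerM a b x + x * (a / b * kummerM (a + 1) (b + 1) x) := by
  refine ((hasSum_kummerM (a + 1) b x).mul_left a).unique <|
    (((hasSum_kummerM a b x).mul_left a).add
      (hasSum_nat_mul_kummerCoeff_mul_pow a b x)).congr_fun fun s ↦ ?_
  linear_combination x ^ s * mul_kummerCoeff_add_one_left a b s

variable {b}

lemma mul_kummerM_eq_add_one_right (hb : ∀ n : ℕ, b ≠ -n) :
    b * kummerM a b x = b * kummerM a (b + 1) x +
      x * (a / (b + 1) * kummerM (a + 1) (b + 1 + 1) x) := by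
  refine ((hasSum_kummerM a b x).mul_left b).unique <|
    (((hasSum_kummerM a (b + 1) x).mul_left b).add
      (hasSum_nat_mul_kummerCoeff_mul_pow a (b + 1) x)).congr_fun fun s ↦ ?_
  linear_combination x ^ s * mul_kummerCoeff_eq_mul_add_one_right a s hb

lemma hasDerivAt_kummerM' (hb : ∀ n : ℕ, b ≠ -n) :
    HasDerivAt (kummerM a b) (kummerM a b x + (a - b) / b * kummerM a (b + 1) x) x := by
  have hb₀ : b ≠ 0 := by simpa using hb 0
  have hcontiguous :
      a * kummerM (a + 1) (b + 1) x = b * kummerM a b x + (a - b) * kummerM a (b + 1) x := by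
    linear_combination mul_kummerM_add_one_left a (b + 1) x - mul_kummerM_eq_add_one_right a x hb
  refine (hasDerivAt_kummerM a b x).congr_deriv ?_
  field_simp
  exact hcontiguous

lemma hasDerivAt_mul_kummerM (hb : ∀ n : ℕ, b ≠ -n) :
    HasDerivAt (fun y ↦ y * kummerM a (b + 1) y)
      (b * kummerM a b x + (1 - b) * kummerM a (b + 1) x) x := by
  refine ((hasDerivAt_id x).mul (hasDerivAt_kummerM a (b + 1) x)).congr_deriv ?_
  rw [id]
  linear_combination -mul_kummerM_eq_add_one_right a x hb

end Series

/-- The Wronskian of the solutions `M(a, b, x)` and `x ^ (1 - b) M(a - b + 1, 2 - b, x)` of Kummer's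
equation, divided by `(1 - b) x ^ (-b)`. The derivatives have been evaluated, so that no power of
`x` occurs and the function is defined for all real `x`. -/
noncomputable def kummerWronskian (a b x : ℝ) : ℝ :=
  kummerM a b x * kummerM (a - b + 1) (1 - b) x
    - a / (b * (1 - b)) * (x * kummerM (a + 1) (b + 1) x) * kummerM (a - b + 1) (2 - b) x

lemma kummerWronskian_zero_right (a b : ℝ) : kummerWronskian a b 0 = 1 := by
  simp [kummerWronskian, kummerM_zero_right]

lemma hasDerivAt_kummerWronskian (a x : ℝ) {b : ℝ} (hb : ∀ n : ℤ, b ≠ n) :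
    HasDerivAt (kummerWronskian a b) (kummerWronskian a b x) x := by
  have hb₀ : b ≠ 0 := mod_cast hb 0
  have hb₁ : 1 - b ≠ 0 := sub_ne_zero.mpr (mod_cast (hb 1).symm)
  have hb_nat : ∀ n : ℕ, b ≠ -n := fun n ↦ mod_cast hb (-n)
  have hb_nat' : ∀ n : ℕ, 1 - b ≠ -n := fun n h ↦ hb (n + 1) (by push_cast; linarith)
  have hN := hasDerivAt_kummerM' (a - b + 1) x hb_nat'
  have hN_lower := mul_kummerM_eq_add_one_right (a - b + 1) x hb_nat'
  rw [show 1 - b + 1 = 2 - b by ring] at hN hN_lower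
  refine (((hasDerivAt_kummerM a b x).mul hN).sub
    (((hasDerivAt_mul_kummerM (a + 1) x hb_nat).const_mul (a / (b * (1 - b)))).mul
      (hasDerivAt_kummerM (a - b + 1) (2 - b) x))).congr_deriv ?_
  rw [kummerWronskian]
  set c := a / (b * (1 - b)) with hc
  have hcb' : a / b = c * (1 - b) := by rw [hc]; field_simp
  have hcb : (a - b + 1 - (1 - b)) / (1 - b) = c * b := by rw [hc]; field_simp; ring
  have hM_raise : c * (b * kummerM (a + 1) b x) =
      c * (b * kummerM a b x + x * kummerM (a + 1) (b + 1) x) := by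
    have h := mul_kummerM_add_one_left a b x
    rw [hc]
    field_simp at h ⊢
    linear_combination h
  linear_combination
    kummerM (a + 1) (b + 1) x * kummerM (a - b + 1) (1 - b) x * hcb'
      + kummerM a b x * kummerM (a - b + 1) (2 - b) x * hcb
      - kummerM (a - b + 1) (2 - b) x * hM_raise
      + c * kummerM (a + 1) (b + 1) x * hN_lower

lemma eq_mul_exp_of_hasDerivAt_self {f : ℝ → ℝ} (hf : ∀ x, HasDerivAt f (f x) x) (x : ℝ) :
    f x = f 0 * Real.exp x := by
  have hderiv (y : ℝ) : HasDerivAt (fun y ↦ f y * Real.exp (-y)) 0 y :=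
    ((hf y).mul (hasDerivAt_neg y).exp).congr_deriv (by ring)
  have hconst : f x * Real.exp (-x) = f 0 := by
    simpa using is_const_of_deriv_eq_zero (fun y ↦ (hderiv y).differentiableAt)
      (fun y ↦ (hderiv y).deriv) x 0
  rw [← hconst, mul_assoc, ← Real.exp_add, neg_add_cancel, Real.exp_zero, mul_one]

theorem statement_6_general (a x : ℝ) {b : ℝ} (hb : ∀ n : ℤ, b ≠ n) :
    Real.exp x =
      kummerM a b x * kummerM (a - b + 1) (1 - b) x
        - a / (b * (1 - b)) * (x * kummerM (a + 1) (b + 1) x) * kummerM (a - b + 1) (2 - b) x := by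
  have h := eq_mul_exp_of_hasDerivAt_self (fun y ↦ hasDerivAt_kummerWronskian a y hb) x
  rw [kummerWronskian_zero_right, one_mul] at h
  exact h.symm

lemma half_ne_intCast (n : ℤ) : (1 / 2 : ℝ) ≠ n := by
  intro h
  have : (1 : ℤ) = 2 * n := by exact_mod_cast (by linarith : (1 : ℝ) = 2 * n)
  omega

/-- for `α ≥ 0` and all real `z`,
`e^{−z²} = −2α z² M(−α/2+1/2,3/2,−z²) M(−α/2+1,3/2,−z²) + M(−α/2,1/2,−z²) M(−α/2+1/2,1/2,−z²)`. -/
theorem statement_6 (α : ℝ) (hα : 0 ≤ α) (z : ℝ) :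
    Real.exp (-z ^ 2) =
      -2 * α * z ^ 2 * kummerM (-α / 2 + 1 / 2) (3 / 2) (-z ^ 2)
          * kummerM (-α / 2 + 1) (3 / 2) (-z ^ 2)
        + kummerM (-α / 2) (1 / 2) (-z ^ 2) * kummerM (-α / 2 + 1 / 2) (1 / 2) (-z ^ 2) := by
  rw [statement_6_general (-α / 2) (-z ^ 2) half_ne_intCast]
  ring_nf
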